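/- Let G be a finite simple graph, let r ∈ ℕ, and let ρ ⊆ {1, …, r}. Let D be a [ℕ,ρ]-dominating set of G that is minimal, i.e., no proper subset of D is a [ℕ,ρ]-dominating set of G. Let W be an independent set of vertices such that every two distinct vertices of W have the same type. Then either |W ∩ D| ≤ r or W ⊆ D. -/

import Mathlib

/-!
Vertices of the same type that are pairwise nonadjacent have the same neighborhood. If more than `r`
of them lie in `D`, a vertex outside `D` adjacent to one of them is adjacent to all of them and so
has more than `r` neighbors in `D`, which is impossible. Hence removing `u ∈ W ∩ D` from `D` changes
no count outside `D`, and if some `w ∈ W` is not in `D`, then `u` itself has as many neighbors in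
`D \ {u}` as `w` has in `D`. So `D \ {u}` still dominates, contrary to minimality.
-/

section

variable {V : Type*} {G : SimpleGraph V} {ρ : Set ℕ} {D W : Set V} {r : ℕ} {u v w : V}

/-- `D` is a `[ℕ, ρ]`-dominating set: every vertex outside `D` has a number of neighbors in `D` that
lies in `ρ`. The number is an `encard`, so on an infinite graph it is in particular required to be
finite. -/
def IsDominating (G : SimpleGraph V) (ρ : Set ℕ) (D : Set V) : Prop :=
  ∀ v ∉ D, ∃ i ∈ ρ, (G.neighborSet v ∩ D).encard = i

/-- `u` and `v` have the same type: they have the same neighbors apart from each other. -/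
def SameType (G : SimpleGraph V) (u v : V) : Prop :=
  G.neighborSet u \ {v} = G.neighborSet v \ {u}

theorem SameType.neighborSet_eq (h : SameType G u v) (huv : ¬ G.Adj u v) :
    G.neighborSet u = G.neighborSet v := by
  have hv : v ∉ G.neighborSet u := huv
  have hu : u ∉ G.neighborSet v := fun hadj => huv hadj.symm
  rwa [SameType, Set.sdiff_singleton_eq_self hv, Set.sdiff_singleton_eq_self hu] at h

theorem neighborSet_eq_of_isIndepSet_of_sameType (hind : G.IsIndepSet W)
    (htype : W.Pairwise (SameType G)) (hu : u ∈ W) (hv : v ∈ W) :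
    G.neighborSet u = G.neighborSet v := by
  obtain rfl | huv := eq_or_ne u v
  · rfl
  · exact (htype hu hv huv).neighborSet_eq (hind hu hv huv)

theorem neighborSet_inter_sdiff_singleton (h : ¬ G.Adj v u) :
    G.neighborSet v ∩ (D \ {u}) = G.neighborSet v ∩ D := by
  rw [← Set.inter_sdiff_assoc, Set.sdiff_singleton_eq_self fun hu => h hu.1]

theorem IsDominating.encard_inter_le (hD : IsDominating G ρ D) (hρ : ∀ i ∈ ρ, i ≤ r) (hv : v ∉ D)
    (hW : W ⊆ G.neighborSet v) : (W ∩ D).encard ≤ r := by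
  obtain ⟨i, hi, hcount⟩ := hD v hv
  calc (W ∩ D).encard ≤ (G.neighborSet v ∩ D).encard :=
        Set.encard_le_encard (Set.inter_subset_inter_left D hW)
    _ = i := hcount
    _ ≤ r := mod_cast hρ i hi

theorem IsDominating.sdiff_singleton (hD : IsDominating G ρ D) (hw : w ∉ D)
    (huw : G.neighborSet u = G.neighborSet w) (hu : ∀ v ∉ D, ¬ G.Adj v u) :
    IsDominating G ρ (D \ {u}) := by
  intro v hv
  obtain rfl | hvu := eq_or_ne v u
  · rw [neighborSet_inter_sdiff_singleton G.irrefl, huw]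
    exact hD w hw
  · have hvD : v ∉ D := fun h => hv ⟨h, hvu⟩
    rw [neighborSet_inter_sdiff_singleton (hu v hvD)]
    exact hD v hvD

theorem isDominating_coe_finset [DecidableEq V] [G.LocallyFinite] {D : Finset V} :
    IsDominating G ρ D ↔ ∀ v ∉ D, (G.neighborFinset v ∩ D).card ∈ ρ := by
  refine forall₂_congr fun v _ => ?_
  simp only [← G.coe_neighborFinset v, ← Finset.coe_inter, Set.encard_coe_eq_coe_finsetCard,
    Nat.cast_inj, exists_eq_right']

theorem sameType_iff_neighborFinset_erase [DecidableEq V] [Fintype (G.neighborSet u)]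
    [Fintype (G.neighborSet v)] :
    SameType G u v ↔ (G.neighborFinset u).erase v = (G.neighborFinset v).erase u := by
  rw [SameType, ← Finset.coe_inj, Finset.coe_erase, Finset.coe_erase, G.coe_neighborFinset,
    G.coe_neighborFinset]

theorem stmt15_general (hρ : ∀ i ∈ ρ, i ≤ r) (hD : IsDominating G ρ D)
    (hmin : ∀ u ∈ D, ¬ IsDominating G ρ (D \ {u})) (hind : G.IsIndepSet W)
    (htype : W.Pairwise (SameType G)) : (W ∩ D).encard ≤ r ∨ W ⊆ D := by
  by_contra! ⟨hcard, hWD⟩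
  obtain ⟨w, hwW, hwD⟩ := Set.not_subset.mp hWD
  obtain ⟨u, huW, huD⟩ := Set.encard_pos.mp (bot_le.trans_lt hcard)
  have hN : ∀ x ∈ W, G.neighborSet u = G.neighborSet x := fun x hx =>
    neighborSet_eq_of_isIndepSet_of_sameType hind htype huW hx
  have hu : ∀ v ∉ D, ¬ G.Adj v u := by
    intro v hv hvu
    have hWv : W ⊆ G.neighborSet v := by
      intro x hx
      have hvx : v ∈ G.neighborSet x := hN x hx ▸ hvu.symm
      exact hvx.symm
    exact hcard.not_ge (hD.encard_inter_le hρ hv hWv)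
  exact hmin u huD (hD.sdiff_singleton hwD (hN w hwW) hu)

end

theorem stmt15 {V : Type*} [Fintype V] [DecidableEq V] (G : SimpleGraph V) [DecidableRel G.Adj]
    (r : ℕ) (ρ : Set ℕ) (hρ : ∀ i ∈ ρ, 1 ≤ i ∧ i ≤ r)
    (D : Finset V)
    (hD : ∀ v : V, v ∉ D → (G.neighborFinset v ∩ D).card ∈ ρ)
    (hmin : ∀ D' : Finset V, D' ⊂ D →
      ¬ (∀ v : V, v ∉ D' → (G.neighborFinset v ∩ D').card ∈ ρ))
    (W : Finset V)
    (hWind : ∀ u ∈ W, ∀ v ∈ W, ¬ G.Adj u v)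
    (hWtype : ∀ u ∈ W, ∀ v ∈ W, u ≠ v →
      (G.neighborFinset u).erase v = (G.neighborFinset v).erase u) :
    (W ∩ D).card ≤ r ∨ W ⊆ D := by
  have hdel (u : V) (hu : u ∈ D) : ¬ IsDominating G ρ (D \ {u}) := by
    rw [← Finset.coe_erase, isDominating_coe_finset]
    exact hmin _ (Finset.erase_ssubset hu)
  have h := stmt15_general (W := W) (fun i hi => (hρ i hi).2) (isDominating_coe_finset.mpr hD) hdel
    (fun u hu v hv _ => hWind u hu v hv)
    (fun u hu v hv huv => sameType_iff_neighborFinset_erase.mpr (hWtype u hu v hv huv))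
  rwa [← Finset.coe_inter, Set.encard_coe_eq_coe_finsetCard, Nat.cast_le, Finset.coe_subset] at h
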